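/- arXiv:2407.10478 — 2 statements merged into one kernel-verified Lean document; each statement's English description precedes it below -/
import Mathlib

section
/- For 2 ≤ k < n, the closure of Σ_k in Herm(n) with respect to the Frobenius-norm topology equals the set {H ∈ Herm(n) : λ_1(H) = … = λ_k(H)} of all Hermitian matrices whose lowest k eigenvalues coincide; equivalently, cl(Σ_k) is the disjoint union Σ_k ∪ Σ_{k+1} ∪ … ∪ Σ_n (where Σ_n is the set of real scalar matrices). -/
open Matrix

noncomputable section

/-- Sorted eigenvalues (increasing, counted with multiplicity) of a Hermitian matrix
(junk value for non-Hermitian matrices). -/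
def eigs {n : ℕ} (H : Matrix (Fin n) (Fin n) ℂ) : Fin n → ℝ :=
  if hH : H.IsHermitian then hH.eigenvalues ∘ Tuple.sort hH.eigenvalues else fun _ => 0

/-- The set Σ_j of j-fold ground-state degenerate Hermitian matrices:
λ₁ = … = λ_j < λ_{j+1} (for j = n the gap condition is vacuous, so Σ_n is the set of
Hermitian matrices with all eigenvalues equal, i.e. the real scalar matrices). -/
def SigmaSet (n k : ℕ) : Set (Matrix (Fin n) (Fin n) ℂ) :=
  {H | H.IsHermitian ∧ (∀ i j : Fin n, (i : ℕ) < k → (j : ℕ) < k → eigs H i = eigs H j) ∧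
    ∀ i j : Fin n, (i : ℕ) < k → (j : ℕ) = k → eigs H i < eigs H j}

lemma eigs_monotone {n : ℕ} (H : Matrix (Fin n) (Fin n) ℂ) : Monotone (eigs H) := by
  unfold eigs
  split_ifs with h
  · exact Tuple.monotone_sort _
  · exact monotone_const

lemma exists_diag {n : ℕ} (H : Matrix (Fin n) (Fin n) ℂ) (hH : H.IsHermitian) :
    ∃ U : Matrix (Fin n) (Fin n) ℂ, Uᴴ * U = 1 ∧
      Uᴴ * H * U = diagonal (fun i => ((eigs H i : ℝ) : ℂ)) := by
  have h1 := hH.conjStarAlgAut_star_eigenvectorUnitary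
  rw [Unitary.conjStarAlgAut_star_apply] at h1
  have h2 : (hH.eigenvectorUnitary : Matrix (Fin n) (Fin n) ℂ)ᴴ * hH.eigenvectorUnitary = 1 :=
    Unitary.coe_star_mul_self _
  generalize (hH.eigenvectorUnitary : Matrix (Fin n) (Fin n) ℂ) = V at h1 h2
  rw [star_eq_conjTranspose] at h1
  refine ⟨V.submatrix id (Tuple.sort hH.eigenvalues), ?_, ?_⟩
  · rw [conjTranspose_submatrix, ← submatrix_mul _ _ _ _ _ Function.bijective_id, h2]
    simp
  · rw [conjTranspose_submatrix]
    have key : ∀ σ : Equiv.Perm (Fin n),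
        Vᴴ.submatrix σ id * H * V.submatrix id σ = (Vᴴ * H * V).submatrix σ σ := by
      intro σ
      rw [submatrix_mul _ _ _ _ _ Function.bijective_id,
        submatrix_mul _ _ _ _ _ Function.bijective_id, submatrix_id_id]
    rw [key, h1, submatrix_diagonal_equiv]
    congr 1
    ext i
    simp [eigs, hH]

lemma eigs_of_diag {n : ℕ} (H U : Matrix (Fin n) (Fin n) ℂ) (d : Fin n → ℝ) (hd : Monotone d)
    (hU : Uᴴ * U = 1) (h : Uᴴ * H * U = diagonal (fun i => ((d i : ℝ) : ℂ))) :
    H.IsHermitian ∧ eigs H = d := by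
  have hU' : U * Uᴴ = 1 := mul_eq_one_comm.mp hU
  have hHe : H = U * diagonal (fun i => ((d i : ℝ) : ℂ)) * Uᴴ := by
    rw [← h]
    calc H = (U * Uᴴ) * H * (U * Uᴴ) := by rw [hU']; simp
      _ = _ := by simp only [Matrix.mul_assoc]
  have hH : H.IsHermitian := by
    rw [hHe]
    apply isHermitian_mul_mul_conjTranspose
    rw [IsHermitian, diagonal_conjTranspose]
    congr 1
    ext i
    simp
  refine ⟨hH, ?_⟩
  have hc : H.charpoly = (diagonal (fun i => ((d i : ℝ) : ℂ))).charpoly := by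
    conv_lhs => rw [hHe, charpoly_mul_comm, ← Matrix.mul_assoc, hU, Matrix.one_mul]
  have hr := hH.roots_charpoly_eq_eigenvalues
  rw [hc, charpoly_diagonal, Polynomial.roots_prod _ _
    (by simp [Finset.prod_ne_zero_iff, Polynomial.X_sub_C_ne_zero])] at hr
  have hr2 := congrArg (Multiset.map Complex.re) hr
  simp only [Polynomial.roots_X_sub_C, Multiset.bind_singleton, Multiset.map_map] at hr2
  have hr3 : Multiset.map d Finset.univ.val = Multiset.map hH.eigenvalues Finset.univ.val := by
    simpa [Function.comp_def] using hr2
  have hr4 : Multiset.map (eigs H) Finset.univ.val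
      = Multiset.map hH.eigenvalues Finset.univ.val := by
    have : eigs H = hH.eigenvalues ∘ Tuple.sort hH.eigenvalues := by simp [eigs, hH]
    rw [this, ← Multiset.map_map]
    simp
  rw [← hr3, Fin.univ_val_map, Fin.univ_val_map, Multiset.coe_eq_coe] at hr4
  exact List.ofFn_injective (hr4.eq_of_sortedLE (eigs_monotone H).sortedLE_ofFn hd.sortedLE_ofFn)

lemma isCompact_unit (n : ℕ) : IsCompact {U : Matrix (Fin n) (Fin n) ℂ | Uᴴ * U = 1} := by
  have hK : IsCompact (Set.pi Set.univ fun _ : Fin n => Set.pi Set.univ fun _ : Fin n =>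
      Metric.closedBall (0 : ℂ) 1) :=
    isCompact_univ_pi fun _ => isCompact_univ_pi fun _ => isCompact_closedBall _ _
  refine IsCompact.of_isClosed_subset (X := Matrix (Fin n) (Fin n) ℂ) hK ?_ ?_
  · exact isClosed_eq (by fun_prop) (by fun_prop)
  · intro U hU i _ j _
    rw [mem_closedBall_zero_iff]
    exact entry_norm_bound_of_unitary (mem_unitaryGroup_iff'.mpr hU) i j

def lowSet (n k : ℕ) : Set (Matrix (Fin n) (Fin n) ℂ) :=
  {H : Matrix (Fin n) (Fin n) ℂ | H.IsHermitian ∧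
          ∀ i j : Fin n, (i : ℕ) < k → (j : ℕ) < k → eigs H i = eigs H j}

lemma isClosed_low (n k : ℕ) : IsClosed (lowSet n k) := by
  have : CompactSpace {U : Matrix (Fin n) (Fin n) ℂ | Uᴴ * U = 1} :=
    isCompact_iff_compactSpace.mp (isCompact_unit n)
  let K : Set (Matrix (Fin n) (Fin n) ℂ) :=
    {M | M = diagonal (fun i => (((M i i).re : ℝ) : ℂ)) ∧
      (∀ i j : Fin n, i ≤ j → (M i i).re ≤ (M j j).re) ∧
      ∀ i j : Fin n, (i : ℕ) < k → (j : ℕ) < k → (M i i).re = (M j j).re}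
  have hent : ∀ i j : Fin n, Continuous fun M : Matrix (Fin n) (Fin n) ℂ => M i j :=
    fun i j => continuous_id.matrix_elem i j
  have hre : ∀ i : Fin n, Continuous fun M : Matrix (Fin n) (Fin n) ℂ => (M i i).re :=
    fun i => Complex.continuous_re.comp (hent i i)
  have hK : IsClosed K := by
    have c1 : IsClosed {M : Matrix (Fin n) (Fin n) ℂ |
        M = diagonal (fun i => (((M i i).re : ℝ) : ℂ))} := by
      refine isClosed_eq continuous_id (Continuous.matrix_diagonal ?_)
      exact continuous_pi fun i => Complex.continuous_ofReal.comp (hre i)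
    have c2 : IsClosed {M : Matrix (Fin n) (Fin n) ℂ |
        ∀ i j : Fin n, i ≤ j → (M i i).re ≤ (M j j).re} := by
      simp only [Set.ofPred_forall]
      exact isClosed_iInter fun i => isClosed_iInter fun j => isClosed_iInter fun _ =>
        isClosed_le (hre i) (hre j)
    have c3 : IsClosed {M : Matrix (Fin n) (Fin n) ℂ |
        ∀ i j : Fin n, (i : ℕ) < k → (j : ℕ) < k → (M i i).re = (M j j).re} := by
      simp only [Set.ofPred_forall]
      exact isClosed_iInter fun i => isClosed_iInter fun j => isClosed_iInter fun _ =>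
        isClosed_iInter fun _ => isClosed_eq (hre i) (hre j)
    exact c1.inter (c2.inter c3)
  let f : {U : Matrix (Fin n) (Fin n) ℂ | Uᴴ * U = 1} × Matrix (Fin n) (Fin n) ℂ →
    Matrix (Fin n) (Fin n) ℂ := fun p => (p.1 : Matrix (Fin n) (Fin n) ℂ)ᴴ * p.2 * p.1
  have hf : Continuous f := by
    have h1 : Continuous fun p : {U : Matrix (Fin n) (Fin n) ℂ | Uᴴ * U = 1} ×
      Matrix (Fin n) (Fin n) ℂ => (p.1 : Matrix (Fin n) (Fin n) ℂ) :=
      continuous_subtype_val.comp continuous_fst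
    exact (h1.matrix_conjTranspose.matrix_mul continuous_snd).matrix_mul h1
  have := isClosedMap_snd_of_compactSpace _ (hK.preimage hf)
  convert this using 1
  ext H
  constructor
  · rintro ⟨hH, he⟩
    obtain ⟨U, hU, hD⟩ := exists_diag H hH
    refine ⟨(⟨U, hU⟩, H), ?_, rfl⟩
    change Uᴴ * H * U ∈ K
    rw [hD]
    refine ⟨by simp, fun i j hij => ?_, fun i j hi hj => ?_⟩
    · simpa using eigs_monotone H hij
    · simpa using he i j hi hj
  · rintro ⟨⟨⟨U, hU⟩, H'⟩, ⟨h1, h2, h3⟩, rfl⟩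
    obtain ⟨hH, he⟩ := eigs_of_diag H' U _ (fun i j hij => h2 i j hij) hU h1
    refine ⟨hH, fun i j hi hj => ?_⟩
    change eigs H' i = eigs H' j
    rw [he]
    exact h3 i j hi hj

lemma low_subset {n k : ℕ} : lowSet n k ⊆ closure (SigmaSet n k) := by
  rintro H ⟨hH, he⟩
  obtain ⟨U, hU, hD⟩ := exists_diag H hH
  have hU' : U * Uᴴ = 1 := mul_eq_one_comm.mp hU
  have hHe : H = U * diagonal (fun i => ((eigs H i : ℝ) : ℂ)) * Uᴴ := by
    rw [← hD]
    calc H = (U * Uᴴ) * H * (U * Uᴴ) := by rw [hU']; simp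
      _ = _ := by simp only [Matrix.mul_assoc]
  let d : ℝ → Fin n → ℝ := fun t i => eigs H i + if (i : ℕ) < k then 0 else t
  let g : ℝ → Matrix (Fin n) (Fin n) ℂ := fun t => U * diagonal (fun i => ((d t i : ℝ) : ℂ)) * Uᴴ
  have hg : Continuous g := by
    refine (continuous_const.matrix_mul (Continuous.matrix_diagonal ?_)).matrix_mul
      continuous_const
    refine continuous_pi fun i => Complex.continuous_ofReal.comp ?_
    by_cases hi : (i : ℕ) < k
    · simp only [d, hi, if_true]; fun_prop
    · simp only [d, hi, if_false]; fun_prop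
  have hg0 : g 0 = H := by
    simp only [g, d, ite_self, add_zero]
    exact hHe.symm
  have ht : Filter.Tendsto g (nhdsWithin 0 (Set.Ioi 0)) (nhds H) := by
    rw [← hg0]
    exact hg.continuousAt.tendsto.mono_left nhdsWithin_le_nhds
  refine mem_closure_of_tendsto ht ?_
  filter_upwards [self_mem_nhdsWithin] with t ht0
  have ht0 : 0 < t := ht0
  have hmono : Monotone (d t) := by
    intro i j hij
    have h1 := eigs_monotone H hij
    have h2 : (i : ℕ) ≤ j := hij
    simp only [d]
    split_ifs <;> first | linarith | omega
  obtain ⟨hh, hee⟩ := eigs_of_diag (g t) U (d t) hmono hU (by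
    calc Uᴴ * g t * U = (Uᴴ * U) * diagonal (fun i => ((d t i : ℝ) : ℂ)) * (Uᴴ * U) := by
          simp only [g, Matrix.mul_assoc]
      _ = _ := by rw [hU]; simp)
  refine ⟨hh, fun i j hi hj => ?_, fun i j hi hj => ?_⟩
  · rw [hee]
    simp only [d, hi, hj, if_true, he i j hi hj]
  · rw [hee]
    have h1 : eigs H i ≤ eigs H j := eigs_monotone H (Fin.le_def.mpr (by omega))
    have hj' : ¬ (j : ℕ) < k := by omega
    simp only [d, hi, hj', if_true, if_false]
    linarith

lemma low_eq_union {n k : ℕ} (hkn : k < n) :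
    lowSet n k = ⋃ j ∈ Finset.Icc k n, SigmaSet n j := by
  ext H
  simp only [Set.mem_iUnion, Finset.mem_Icc, exists_prop]
  constructor
  · rintro ⟨hH, he⟩
    classical
    let P : ℕ → Prop := fun m => ∀ i j : Fin n, (i : ℕ) < m → (j : ℕ) < m → eigs H i = eigs H j
    have hP : P (Nat.findGreatest P n) := Nat.findGreatest_spec hkn.le he
    have hle : k ≤ Nat.findGreatest P n := Nat.le_findGreatest hkn.le he
    refine ⟨Nat.findGreatest P n, ⟨hle, Nat.findGreatest_le n⟩, hH, hP, ?_⟩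
    intro i j hi hj
    by_contra hlt
    have hnot : ¬ P (Nat.findGreatest P n + 1) :=
      Nat.findGreatest_is_greatest (Nat.lt_succ_self _) (by omega)
    have hij : eigs H i = eigs H j :=
      le_antisymm (eigs_monotone H (Fin.le_def.mpr (by omega))) (not_lt.mp hlt)
    have key : ∀ a : Fin n, (a : ℕ) < Nat.findGreatest P n + 1 → eigs H a = eigs H i := by
      intro a ha
      by_cases h : (a : ℕ) < Nat.findGreatest P n
      · exact hP a i h hi
      · have : a = j := Fin.ext (by omega)
        rw [this, hij]
    exact hnot fun a b ha hb => (key a ha).trans (key b hb).symm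
  · rintro ⟨j, ⟨hj, -⟩, hH, h, -⟩
    exact ⟨hH, fun a b ha hb => h a b (by omega) (by omega)⟩

lemma sigma_disj {n j j' : ℕ} (hj : 0 < j) (hj' : j' ≤ n) (h : j < j') :
    Disjoint (SigmaSet n j) (SigmaSet n j') := by
  rw [Set.disjoint_left]
  rintro H ⟨-, -, h1⟩ ⟨-, h2, -⟩
  have a := h1 ⟨0, by omega⟩ ⟨j, by omega⟩ hj rfl
  have b := h2 ⟨0, by omega⟩ ⟨j, by omega⟩ (by simp; omega) h
  exact absurd b a.ne

/-- **Closure of Σ_k:** the closure of Σ_k equals the set of Hermitian matrices whose lowest k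
eigenvalues coincide; equivalently it is the disjoint union Σ_k ∪ Σ_{k+1} ∪ … ∪ Σ_n. -/
theorem closure_SigmaSet {n k : ℕ} (hk2 : 2 ≤ k) (hkn : k < n) :
    closure (SigmaSet n k)
      = {H : Matrix (Fin n) (Fin n) ℂ | H.IsHermitian ∧
          ∀ i j : Fin n, (i : ℕ) < k → (j : ℕ) < k → eigs H i = eigs H j} ∧
    closure (SigmaSet n k) = (⋃ j ∈ Finset.Icc k n, SigmaSet n j) ∧
    ∀ j j' : ℕ, k ≤ j → j ≤ n → k ≤ j' → j' ≤ n → j ≠ j' →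
      Disjoint (SigmaSet n j) (SigmaSet n j') := by
  have hc : closure (SigmaSet n k) = lowSet n k :=
    Set.Subset.antisymm
      (closure_minimal (fun H hH => ⟨hH.1, hH.2.1⟩) (isClosed_low n k)) low_subset
  refine ⟨hc, hc.trans (low_eq_union hkn), fun j j' h1 h2 h3 h4 hne => ?_⟩
  rcases lt_or_gt_of_ne hne with h | h
  · exact sigma_disj (by omega) h4 h
  · exact (sigma_disj (by omega) h2 h).symm

end
end

section
/- Let H : ℝ → Herm(n) be real-analytic in a neighborhood of 0 (each H(t) an n×n complex Hermitian matrix). Then there exist ε > 0 and a permutation σ of {1,…,n} such that for each i ∈ {1,…,n} the function λ̃_i : (−ε,ε) → ℝ defined by λ̃_i(t) = λ_i(H(t)) for t ≥ 0 and λ̃_i(t) = λ_{σ(i)}(H(t)) for t < 0 is real-analytic on (−ε,ε). In particular, for every t ∈ (−ε,ε), the multiset {λ̃_1(t),…,λ̃_n(t)} equals the multiset of eigenvalues of H(t) counted with multiplicity. -/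
open Matrix

attribute [local instance] Matrix.normedAddCommGroup Matrix.normedSpace

noncomputable section

section
open Polynomial Filter Topology

def mkP (k : ℕ) (a : Fin k → ℝ) : ℝ[X] := X ^ k + ∑ i : Fin k, C (a i) * X ^ (i : ℕ)

lemma mkP_deg_lt (k : ℕ) (a : Fin k → ℝ) :
    (∑ i : Fin k, C (a i) * X ^ (i : ℕ) : ℝ[X]).degree < (k : ℕ) := by
  exact degree_sum_fin_lt a

lemma sumP_coeff (k : ℕ) (a : Fin k → ℝ) (j : ℕ) :
    (∑ i : Fin k, C (a i) * X ^ (i : ℕ) : ℝ[X]).coeff j = if h : j < k then a ⟨j, h⟩ else 0 := by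
  rw [finsetSum_coeff]
  simp only [coeff_C_mul, coeff_X_pow]
  split_ifs with h
  · rw [Finset.sum_eq_single ⟨j, h⟩]
    · simp
    · intro b _ hb
      have : j ≠ b := fun e => hb (Fin.ext e.symm)
      simp [this]
    · simp
  · apply Finset.sum_eq_zero
    intro i _
    have : j ≠ i := by have := i.2; omega
    simp [this]

lemma mkP_monic (k : ℕ) (a : Fin k → ℝ) : (mkP k a).Monic :=
  monic_X_pow_add (mkP_deg_lt k a)

lemma mkP_natDegree (k : ℕ) (a : Fin k → ℝ) : (mkP k a).natDegree = k := by
  have h : (mkP k a).degree = k := by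
    unfold mkP
    rw [degree_add_eq_left_of_degree_lt]
    · simp
    · simpa using mkP_deg_lt k a
  exact natDegree_eq_of_degree_eq_some h

lemma mkP_coeff (k : ℕ) (a : Fin k → ℝ) (j : ℕ) :
    (mkP k a).coeff j = if h : j < k then a ⟨j, h⟩ else if j = k then 1 else 0 := by
  unfold mkP
  rw [coeff_add, sumP_coeff, coeff_X_pow]
  split_ifs <;> first | omega | simp

lemma eq_mkP {k : ℕ} {p : ℝ[X]} (hp : p.Monic) (hd : p.natDegree = k) :
    p = mkP k (fun i => p.coeff i) := by
  ext j
  rw [mkP_coeff]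
  split_ifs with h1 h2
  · rfl
  · rw [h2, ← hd]; exact hp
  · apply coeff_eq_zero_of_natDegree_lt; omega

lemma mkP_coeff_analytic {E : Type*} [NormedAddCommGroup E] [NormedSpace ℝ E] {k : ℕ}
    {a : E → Fin k → ℝ} {x : E} (ha : ∀ i, AnalyticAt ℝ (fun t => a t i) x) (j : ℕ) :
    AnalyticAt ℝ (fun t => (mkP k (a t)).coeff j) x := by
  simp only [mkP_coeff]
  split_ifs with h1 h2
  · exact ha _
  · exact analyticAt_const
  · exact analyticAt_const

lemma mkP_add_smul (k : ℕ) (a u : Fin k → ℝ) (s : ℝ) :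
    mkP k (a + s • u) = mkP k a + C s * ∑ i : Fin k, C (u i) * X ^ (i : ℕ) := by
  unfold mkP
  rw [add_assoc, Finset.mul_sum, ← Finset.sum_add_distrib]
  congr 1
  refine Finset.sum_congr rfl fun i _ => ?_
  simp; ring

lemma hensel (k l : ℕ) (p : ℝ → ℝ[X]) (hm : ∀ t, (p t).Monic)
    (hd : ∀ t, (p t).natDegree = k + l) (ha : ∀ j, AnalyticAt ℝ (fun t => (p t).coeff j) 0)
    (f g : ℝ[X]) (hf : f.Monic) (hfd : f.natDegree = k) (hg : g.Monic) (hgd : g.natDegree = l)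
    (hc : IsCoprime f g) (h0 : p 0 = f * g) :
    ∃ F G : ℝ → ℝ[X], (∀ t, (F t).Monic) ∧ (∀ t, (F t).natDegree = k) ∧
      (∀ j, AnalyticAt ℝ (fun t => (F t).coeff j) 0) ∧ (∀ t, (G t).Monic) ∧
      (∀ t, (G t).natDegree = l) ∧
      (∀ j, AnalyticAt ℝ (fun t => (G t).coeff j) 0) ∧ ∀ᶠ t in 𝓝 0, p t = F t * G t := by
  let Φ : (Fin k → ℝ) × (Fin l → ℝ) → (Fin (k + l) → ℝ) :=
    fun x j => (mkP k x.1 * mkP l x.2).coeff j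
  let x0 : (Fin k → ℝ) × (Fin l → ℝ) := (fun i => f.coeff i, fun i => g.coeff i)
  have hfx : mkP k x0.1 = f := (eq_mkP hf hfd).symm
  have hgx : mkP l x0.2 = g := (eq_mkP hg hgd).symm
  have hΦ : AnalyticAt ℝ Φ x0 := by
    rw [analyticAt_pi_iff]
    intro j
    simp only [coeff_mul]
    apply Finset.analyticAt_fun_sum
    intro c _
    apply AnalyticAt.fun_mul
    · apply mkP_coeff_analytic
      intro i
      exact ((ContinuousLinearMap.proj (R := ℝ) (φ := fun _ : Fin k => ℝ) i).comp
        (ContinuousLinearMap.fst ℝ _ _)).analyticAt x0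
    · apply mkP_coeff_analytic
      intro i
      exact ((ContinuousLinearMap.proj (R := ℝ) (φ := fun _ : Fin l => ℝ) i).comp
        (ContinuousLinearMap.snd ℝ _ _)).analyticAt x0
  have hD : HasFDerivAt Φ (fderiv ℝ Φ x0) x0 := hΦ.differentiableAt.hasFDerivAt
  have hinj : Function.Injective (fderiv ℝ Φ x0) := by
    rw [injective_iff_map_eq_zero]
    rintro ⟨u, v⟩ huv
    set U : ℝ[X] := ∑ i : Fin k, C (u i) * X ^ (i : ℕ) with hU
    set V : ℝ[X] := ∑ i : Fin l, C (v i) * X ^ (i : ℕ) with hV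
    have hUd : U.degree < k := mkP_deg_lt k u
    have hVd : V.degree < l := mkP_deg_lt l v
    have hfdeg : f.degree = k := by rw [degree_eq_natDegree hf.ne_zero, hfd]
    have hgdeg : g.degree = l := by rw [degree_eq_natDegree hg.ne_zero, hgd]
    have key : f * V + g * U = 0 := by
      have hdeg : (f * V + g * U).degree < (k + l : ℕ) := by
        refine (degree_add_le _ _).trans_lt (max_lt ?_ ?_)
        · rw [degree_mul, hfdeg]
          by_cases hV0 : V = 0
          · simp [hV0]
          · rw [degree_eq_natDegree hV0] at hVd ⊢
            have : V.natDegree < l := by exact_mod_cast hVd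
            exact_mod_cast (by omega : k + V.natDegree < k + l)
        · rw [degree_mul, hgdeg]
          by_cases hU0 : U = 0
          · simp [hU0]
          · rw [degree_eq_natDegree hU0] at hUd ⊢
            have : U.natDegree < k := by exact_mod_cast hUd
            exact_mod_cast (by omega : l + U.natDegree < k + l)
      ext j
      rw [coeff_zero]
      by_cases hj : j < k + l
      swap
      · exact coeff_eq_zero_of_degree_lt (hdeg.trans_le (by exact_mod_cast not_lt.1 hj))
      have h1 : HasDerivAt (fun s : ℝ => x0 + s • (u, v)) (u, v) 0 := by
        simpa using ((hasDerivAt_id (0:ℝ)).smul_const (u, v)).const_add x0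
      have h2 : HasDerivAt (fun s : ℝ => Φ (x0 + s • (u, v))) (fderiv ℝ Φ x0 (u, v)) 0 := by
        have hD' : HasFDerivAt Φ (fderiv ℝ Φ x0) (x0 + (0:ℝ) • (u, v)) := by simpa using hD
        exact hD'.comp_hasDerivAt (0:ℝ) h1
      rw [huv] at h2
      have h3 := (hasDerivAt_pi.1 h2) ⟨j, hj⟩
      have h4 : (fun s : ℝ => Φ (x0 + s • (u, v)) ⟨j, hj⟩) =
          fun s => (f * g).coeff j + s * (f * V + g * U).coeff j + s ^ 2 * (U * V).coeff j := by
        funext s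
        simp only [Φ, Prod.fst_add, Prod.snd_add, Prod.smul_fst, Prod.smul_snd]
        rw [mkP_add_smul, mkP_add_smul, hfx, hgx, ← hU, ← hV, ← coeff_C_mul, ← coeff_C_mul,
          ← coeff_add, ← coeff_add]
        congr 1
        rw [map_pow]
        ring
      rw [h4] at h3
      have h5 : HasDerivAt (fun s : ℝ => (f * g).coeff j + s * (f * V + g * U).coeff j
          + s ^ 2 * (U * V).coeff j) ((f * V + g * U).coeff j) 0 := by
        have := (((hasDerivAt_id (0:ℝ)).mul_const ((f * V + g * U).coeff j)).const_add
          ((f * g).coeff j)).add ((hasDerivAt_pow 2 (0:ℝ)).mul_const ((U * V).coeff j))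
        exact HasDerivAt.congr_deriv this (by simp)
      have := h5.unique h3
      simpa using this
    have hU0 : U = 0 := by
      have : f ∣ g * U := ⟨-V, by linear_combination key⟩
      have : f ∣ U := hc.dvd_of_dvd_mul_left this
      exact eq_zero_of_dvd_of_degree_lt this (by rwa [hfdeg])
    have hV0 : V = 0 := by
      rw [hU0] at key
      have : f * V = 0 := by simpa using key
      exact (mul_eq_zero.1 this).resolve_left hf.ne_zero
    refine Prod.ext (funext fun i => ?_) (funext fun i => ?_)
    · have := sumP_coeff k u i
      rw [← hU, hU0] at this
      simpa using this.symm
    · have := sumP_coeff l v i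
      rw [← hV, hV0] at this
      simpa using this.symm
  have hfin : Module.finrank ℝ ((Fin k → ℝ) × (Fin l → ℝ)) = Module.finrank ℝ (Fin (k + l) → ℝ) := by
    simp
  let e0 := LinearEquiv.ofInjectiveOfFinrankEq (fderiv ℝ Φ x0 : _ →ₗ[ℝ] _) hinj hfin
  let e : ((Fin k → ℝ) × (Fin l → ℝ)) ≃L[ℝ] (Fin (k + l) → ℝ) := e0.toContinuousLinearEquiv
  have he : (e : _ →L[ℝ] _) = fderiv ℝ Φ x0 := by
    ext x <;> rfl
  rw [← he] at hD
  have hcd : ContDiffAt ℝ ⊤ Φ x0 := hΦ.contDiffAt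
  have hS := hcd.hasStrictFDerivAt' hD (by simp)
  let Ψ := hcd.localInverse hD (by simp)
  have hΨ : AnalyticAt ℝ Ψ (Φ x0) := (hcd.to_localInverse hD (by simp)).analyticAt
  have hinv : ∀ᶠ y in 𝓝 (Φ x0), Φ (Ψ y) = y := hS.eventually_right_inverse
  let c : ℝ → (Fin (k + l) → ℝ) := fun t j => (p t).coeff j
  have hca : AnalyticAt ℝ c 0 := by
    rw [analyticAt_pi_iff]
    intro j
    exact ha j
  have hc0 : c 0 = Φ x0 := by
    funext j
    simp only [c, Φ, hfx, hgx, h0]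
  have hΨc : AnalyticAt ℝ (fun t => Ψ (c t)) 0 := by
    rw [← hc0] at hΨ
    exact hΨ.comp hca
  refine ⟨fun t => mkP k (Ψ (c t)).1, fun t => mkP l (Ψ (c t)).2, fun t => mkP_monic _ _,
    fun t => mkP_natDegree _ _, mkP_coeff_analytic ?_, fun t => mkP_monic _ _,
    fun t => mkP_natDegree _ _, mkP_coeff_analytic ?_, ?_⟩
  · intro i
    exact (((ContinuousLinearMap.proj (R := ℝ) (φ := fun _ : Fin k => ℝ) i).comp
        (ContinuousLinearMap.fst ℝ _ _)).analyticAt _).comp hΨc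
  · intro i
    exact (((ContinuousLinearMap.proj (R := ℝ) (φ := fun _ : Fin l => ℝ) i).comp
        (ContinuousLinearMap.snd ℝ _ _)).analyticAt _).comp hΨc
  · have hct : Tendsto c (𝓝 0) (𝓝 (Φ x0)) := by rw [← hc0]; exact hca.continuousAt
    filter_upwards [hct.eventually hinv] with t ht
    have hM : (mkP k (Ψ (c t)).1 * mkP l (Ψ (c t)).2).Monic := (mkP_monic _ _).mul (mkP_monic _ _)
    have hMd : (mkP k (Ψ (c t)).1 * mkP l (Ψ (c t)).2).natDegree = k + l := by
      rw [(mkP_monic _ _).natDegree_mul (mkP_monic _ _), mkP_natDegree, mkP_natDegree]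
    rw [eq_mkP (hm t) (hd t), eq_mkP hM hMd]
    congr 1
    exact ht.symm

lemma analytic_form {f : ℝ → ℝ} (hf : AnalyticAt ℝ f 0) :
    (∀ᶠ t in 𝓝 0, f t = 0) ∨ ∃ (N : ℕ) (u : ℝ → ℝ), AnalyticAt ℝ u 0 ∧ u 0 ≠ 0 ∧
      ∀ᶠ t in 𝓝 0, f t = t ^ N * u t := by
  by_cases h : analyticOrderAt f 0 = ⊤
  · left; exact analyticOrderAt_eq_top.1 h
  · right
    obtain ⟨N, hN⟩ := ENat.ne_top_iff_exists.1 h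
    obtain ⟨g, hg, hg0, h⟩ := hf.analyticOrderAt_eq_natCast.1 hN.symm
    exact ⟨N, g, hg, hg0, by simpa using h⟩

lemma analytic_div {f : ℝ → ℝ} (hf : AnalyticAt ℝ f 0) (j : ℕ) (K : ℝ)
    (hb : ∀ᶠ t in 𝓝 0, |f t| ≤ K * |t| ^ j) :
    ∃ g : ℝ → ℝ, AnalyticAt ℝ g 0 ∧ ∀ᶠ t in 𝓝 0, f t = t ^ j * g t := by
  rcases analytic_form hf with h | ⟨N, u, hu, hu0, h⟩
  · exact ⟨fun _ => 0, analyticAt_const, by simpa using h⟩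
  by_cases hN : j ≤ N
  · refine ⟨fun t => t ^ (N - j) * u t, by fun_prop, ?_⟩
    filter_upwards [h] with t ht
    rw [ht, ← mul_assoc, ← pow_add]
    congr 2; omega
  · exfalso
    push Not at hN
    have h1 : ∀ᶠ t in 𝓝[≠] (0:ℝ), |u t| ≤ K * |t| ^ (j - N) := by
      filter_upwards [h.filter_mono nhdsWithin_le_nhds, hb.filter_mono nhdsWithin_le_nhds,
        self_mem_nhdsWithin] with t h1 h2 h3
      have h3 : 0 < |t| := abs_pos.2 h3
      rw [h1, abs_mul, abs_pow] at h2
      have : |t| ^ j = |t| ^ N * |t| ^ (j - N) := by rw [← pow_add]; congr 1; omega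
      rw [this] at h2
      have h4 : 0 < |t| ^ N := by positivity
      refine le_of_mul_le_mul_left ?_ h4
      linarith
    have h2 : Tendsto (fun t => |u t|) (𝓝[≠] (0:ℝ)) (𝓝 |u 0|) :=
      (hu.continuousAt.tendsto.abs).mono_left nhdsWithin_le_nhds
    have h3 : Tendsto (fun t : ℝ => K * |t| ^ (j - N)) (𝓝[≠] (0:ℝ)) (𝓝 0) := by
      have : Continuous (fun t : ℝ => K * |t| ^ (j - N)) := by fun_prop
      have h := this.tendsto 0
      rw [abs_zero, zero_pow (by omega), mul_zero] at h
      exact h.mono_left nhdsWithin_le_nhds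
    have := le_of_tendsto_of_tendsto h2 h3 h1
    exact hu0 (abs_eq_zero.1 (le_antisymm this (abs_nonneg _)))

lemma eq_at_zero {f g : ℝ → ℝ} (hf : ContinuousAt f 0) (hg : ContinuousAt g 0)
    (h : ∀ᶠ t in 𝓝[≠] 0, f t = g t) : f 0 = g 0 :=
  tendsto_nhds_unique_of_eventuallyEq (hf.tendsto.mono_left nhdsWithin_le_nhds)
    (hg.tendsto.mono_left nhdsWithin_le_nhds) h

lemma splits_limit {n : ℕ} {p : ℝ → ℝ[X]} (hm : ∀ t, (p t).Monic) (hd : ∀ t, (p t).natDegree = n)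
    (ha : ∀ j, AnalyticAt ℝ (fun t => (p t).coeff j) 0)
    (hs : ∀ᶠ t in 𝓝[≠] 0, (p t).Splits) : (p 0).Splits := by
  refine Splits.of_splits_map (algebraMap ℝ ℂ) (IsAlgClosed.splits _) ?_
  intro z hz
  have hz0 : aeval z (p 0) = 0 := by
    rw [← eval_map_algebraMap]; exact (mem_roots'.1 hz).2
  have hlow : ∀ᶠ t in 𝓝[≠] (0:ℝ), |z.im| ^ n ≤ ‖aeval z (p t)‖ := by
    filter_upwards [hs] with t ht
    rw [ht.map (algebraMap ℝ ℂ) |>.aeval_eq_prod_aroots_of_monic (hm t), aroots,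
      ht.roots_map, Multiset.map_map, ← hd t, ht.natDegree_eq_card_roots]
    generalize (p t).roots = s
    induction s using Multiset.induction with
    | empty => simp
    | cons a s ih =>
      simp only [Multiset.card_cons, Multiset.map_cons, Multiset.prod_cons, norm_mul]
      rw [pow_succ, mul_comm]
      gcongr
      have := Complex.abs_im_le_norm (z - (a:ℂ))
      simpa using this
  have hev : ∀ t, aeval z (p t) = ∑ j ∈ Finset.range (n + 1), ((p t).coeff j : ℂ) * z ^ j := by
    intro t
    rw [aeval_eq_sum_range, hd]
    simp
  have hcont : Tendsto (fun t => ‖aeval z (p t)‖) (𝓝[≠] (0:ℝ)) (𝓝 ‖aeval z (p 0)‖) := by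
    refine Tendsto.mono_left (Tendsto.norm ?_) nhdsWithin_le_nhds
    simp only [hev]
    refine tendsto_finsetSum _ fun j _ => Tendsto.mul_const _ ?_
    exact (Complex.continuous_ofReal.tendsto _).comp (ha j).continuousAt.tendsto
  have h := ge_of_tendsto hcont hlow
  rw [hz0, norm_zero] at h
  have : z.im = 0 := by
    by_contra h0
    have : 0 < |z.im| ^ n := by positivity
    linarith
  exact ⟨z.re, Complex.ext (by simp) (by simp [this])⟩

lemma esymm_two (s : Multiset ℝ) : 2 * s.esymm 2 = s.sum ^ 2 - (s.map (· ^ 2)).sum := by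
  induction s using Multiset.induction with
  | empty => simp [Multiset.esymm, Multiset.powersetCard_zero_right]
  | cons a s ih =>
    have : (a ::ₘ s).esymm 2 = s.esymm 2 + a * s.sum := by
      simp [Multiset.esymm, Multiset.powersetCard_cons, Multiset.powersetCard_one,
        Multiset.map_map]
      rw [Multiset.sum_map_mul_left, Multiset.map_id']
    rw [this, mul_add, ih]
    simp
    ring

lemma sum_sq_roots {n : ℕ} (hn : 2 ≤ n) {q : ℝ[X]} (hm : q.Monic) (hd : q.natDegree = n)
    (hs : q.Splits) (h1 : q.coeff (n - 1) = 0) :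
    q.roots.sum = 0 ∧ (q.roots.map (· ^ 2)).sum = -2 * q.coeff (n - 2) := by
  have hsum : q.roots.sum = 0 := by
    have := hs.nextCoeff_eq_neg_sum_roots_of_monic hm
    rw [nextCoeff_of_natDegree_pos (by omega), hd, h1] at this
    linarith
  refine ⟨hsum, ?_⟩
  have h2 := coeff_eq_esymm_roots_of_splits hs (k := n - 2) (by omega)
  have e : n - (n - 2) = 2 := by omega
  rw [hm.leadingCoeff, hd, e] at h2
  have := esymm_two q.roots
  rw [hsum] at this
  linarith

lemma taylor_facts {n : ℕ} (hn : 1 ≤ n) {p : ℝ[X]} (hm : p.Monic) (hd : p.natDegree = n) :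
    (taylor (-(p.coeff (n - 1)) / n) p).coeff (n - 1) = 0 := by
  rw [taylor_coeff, eval_eq_sum_range' (n := 2)]
  · simp only [hasseDeriv_coeff, Finset.sum_range_succ, Finset.sum_range_zero]
    have e : 1 + (n - 1) = n := by omega
    have e3 : n.choose (n - 1) = n := by
      rw [Nat.choose_symm hn]; simp
    have e2 : p.coeff n = 1 := by rw [← hd]; exact hm
    rw [e, e2, e3]
    have : (n:ℝ) ≠ 0 := by positivity
    simp
    field_simp
    ring
  · have := natDegree_hasseDeriv_le p (n - 1)
    omega

lemma taylor_analytic {n : ℕ} {p : ℝ → ℝ[X]} (hd : ∀ t, (p t).natDegree = n)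
    (ha : ∀ j, AnalyticAt ℝ (fun t => (p t).coeff j) 0) {c : ℝ → ℝ} (hc : AnalyticAt ℝ c 0)
    (j : ℕ) : AnalyticAt ℝ (fun t => (taylor (c t) (p t)).coeff j) 0 := by
  have : ∀ t, (taylor (c t) (p t)).coeff j = ∑ i ∈ Finset.range (n + 1),
      (((i + j).choose j : ℕ) * (p t).coeff (i + j)) * c t ^ i := by
    intro t
    rw [taylor_coeff, eval_eq_sum_range' (n := n + 1)]
    · simp only [hasseDeriv_coeff]
    · have := natDegree_hasseDeriv_le (p t) j
      have := hd t
      omega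
  simp only [this]
  refine Finset.analyticAt_fun_sum _ fun i _ => ?_
  have := ha (i + j)
  fun_prop

lemma scaleRoots_prod {n : ℕ} (a : Fin n → ℝ) (s : ℝ) :
    (∏ i, (X - C (a i))).scaleRoots s = ∏ i, (X - C (a i * s)) := by
  classical
  induction (Finset.univ : Finset (Fin n)) using Finset.induction with
  | empty => simp
  | insert i t hi ih =>
    rw [Finset.prod_insert hi, Finset.prod_insert hi, mul_scaleRoots_of_noZeroDivisors, ih,
      X_sub_C_scaleRoots]

def Concl (n : ℕ) (p : ℝ → ℝ[X]) : Prop :=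
  ∃ μ : Fin n → ℝ → ℝ, (∀ i, AnalyticAt ℝ (μ i) 0) ∧ ∀ᶠ t in 𝓝 0, p t = ∏ i, (X - C (μ i t))

def Claim (n : ℕ) : Prop := ∀ p : ℝ → ℝ[X], (∀ t, (p t).Monic) → (∀ t, (p t).natDegree = n) →
    (∀ j, AnalyticAt ℝ (fun t => (p t).coeff j) 0) → (∀ᶠ t in 𝓝 0, (p t).Splits) → Concl n p

lemma split_case {n : ℕ} (IH : ∀ m < n, Claim m) (p : ℝ → ℝ[X]) (hm : ∀ t, (p t).Monic)
    (hd : ∀ t, (p t).natDegree = n)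
    (ha : ∀ j, AnalyticAt ℝ (fun t => (p t).coeff j) 0) (hs : ∀ᶠ t in 𝓝 0, (p t).Splits)
    (r s : ℝ) (hrs : r ≠ s) (hr : (p 0).IsRoot r) (hs' : (p 0).IsRoot s) : Concl n p := by
  obtain ⟨g, hg, hng⟩ := exists_eq_pow_rootMultiplicity_mul_and_not_dvd (p 0) (hm 0).ne_zero r
  set k := rootMultiplicity r (p 0) with hk
  have hk1 : 1 ≤ k := (rootMultiplicity_pos (hm 0).ne_zero).2 hr
  have hfm : ((X - C r) ^ k : ℝ[X]).Monic := (monic_X_sub_C r).pow k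
  have hgm : g.Monic := hfm.of_mul_monic_left (hg ▸ hm 0)
  have hfd : ((X - C r) ^ k : ℝ[X]).natDegree = k := by
    rw [(monic_X_sub_C r).natDegree_pow]; simp
  have hdeg : n = k + g.natDegree := by
    rw [← hd 0, hg, hfm.natDegree_mul hgm, hfd]
  have hgs : g.eval s = 0 := by
    have : (p 0).eval s = 0 := hs'
    rw [hg, eval_mul] at this
    refine (mul_eq_zero.1 this).resolve_left ?_
    simp [sub_eq_zero, hrs.symm]
  have hl1 : 1 ≤ g.natDegree := by
    by_contra h
    have : g.natDegree = 0 := by omega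
    rw [hgm.natDegree_eq_zero.1 this] at hgs
    simp at hgs
  have hco : IsCoprime ((X - C r) ^ k) g :=
    IsCoprime.pow_left (((irreducible_X_sub_C r).coprime_iff_not_dvd).2 hng)
  obtain ⟨l, hl⟩ : ∃ l, g.natDegree = l := ⟨_, rfl⟩
  rw [hl] at hdeg hl1
  subst hdeg
  obtain ⟨F, G, F1, F2, F3, G1, G2, G3, hFG⟩ := hensel k l p hm hd ha _ g hfm hfd hgm hl hco hg
  have hsF : ∀ᶠ t in 𝓝 0, (F t).Splits := by
    filter_upwards [hs, hFG] with t h1 h2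
    exact h1.of_dvd (hm t).ne_zero ⟨_, h2⟩
  have hsG : ∀ᶠ t in 𝓝 0, (G t).Splits := by
    filter_upwards [hs, hFG] with t h1 h2
    exact h1.of_dvd (hm t).ne_zero ⟨_, h2.trans (mul_comm _ _)⟩
  obtain ⟨μ, hμ, hμ'⟩ := IH k (by omega) F F1 F2 F3 hsF
  obtain ⟨ν, hν, hν'⟩ := IH l (by omega) G G1 G2 G3 hsG
  refine ⟨Fin.append μ ν, fun i => ?_, ?_⟩
  · refine Fin.addCases (fun i => ?_) (fun i => ?_) i
    · simpa using hμ i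
    · simpa using hν i
  · filter_upwards [hFG, hμ', hν'] with t h1 h2 h3
    rw [h1, h2, h3, Fin.prod_univ_add]
    simp

lemma unscale_case {n : ℕ} (hn : 2 ≤ n) (IH : ∀ m < n, Claim m) (q : ℝ → ℝ[X])
    (hm : ∀ t, (q t).Monic) (hd : ∀ t, (q t).natDegree = n)
    (ha : ∀ j, AnalyticAt ℝ (fun t => (q t).coeff j) 0) (hs : ∀ᶠ t in 𝓝 0, (q t).Splits)
    (h1 : ∀ t, (q t).coeff (n - 1) = 0) : Concl n q := by
  rcases analytic_form (ha (n - 2)) with h | ⟨N, u, hu, hu0, h⟩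
  · refine ⟨fun _ _ => 0, fun _ => analyticAt_const, ?_⟩
    filter_upwards [h, hs] with t ht hst
    obtain ⟨-, hsq⟩ := sum_sq_roots hn (hm t) (hd t) hst (h1 t)
    rw [ht, mul_zero] at hsq
    have hz : ∀ x ∈ (q t).roots, x = 0 := by
      intro x hx
      have : x ^ 2 ≤ ((q t).roots.map (· ^ 2)).sum := by
        refine Multiset.single_le_sum ?_ _ (Multiset.mem_map_of_mem (· ^ 2) hx)
        intro y hy
        obtain ⟨z, -, rfl⟩ := Multiset.mem_map.1 hy
        positivity
      rw [hsq] at this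
      exact pow_eq_zero_iff (two_ne_zero) |>.1 (le_antisymm this (sq_nonneg x))
    have hrep := Multiset.eq_replicate.2 ⟨hst.natDegree_eq_card_roots.symm, hz⟩
    rw [hst.eq_prod_roots_of_monic (hm t), hrep, hd t]
    simp
  have hnonpos : ∀ᶠ t in 𝓝 0, t ^ N * u t ≤ 0 := by
    filter_upwards [h, hs] with t ht hst
    obtain ⟨-, hsq⟩ := sum_sq_roots hn (hm t) (hd t) hst (h1 t)
    have : 0 ≤ ((q t).roots.map (· ^ 2)).sum := by
      refine Multiset.sum_nonneg ?_
      intro y hy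
      obtain ⟨z, -, rfl⟩ := Multiset.mem_map.1 hy
      positivity
    rw [hsq, ht] at this
    linarith
  have hev : Even N := by
    by_contra hodd
    rw [Nat.not_even_iff_odd] at hodd
    have hneg : Tendsto (fun t : ℝ => -t) (𝓝 0) (𝓝 0) := by
      simpa using (continuous_neg (G := ℝ)).tendsto 0
    have hpos : ∀ᶠ t in 𝓝 (0:ℝ), 0 < u t * u (-t) := by
      have : Tendsto (fun t => u t * u (-t)) (𝓝 0) (𝓝 (u 0 * u 0)) :=
        hu.continuousAt.tendsto.mul (hu.continuousAt.tendsto.comp hneg)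
      exact this.eventually (lt_mem_nhds (mul_self_pos.2 hu0))
    have hall := (hnonpos.and ((hneg.eventually hnonpos).and hpos)).filter_mono
      (nhdsWithin_le_nhds (s := {0}ᶜ))
    obtain ⟨t, ⟨hA, hB, hC⟩, ht0⟩ := (hall.and self_mem_nhdsWithin).exists
    have ht0 : t ≠ 0 := ht0
    rw [hodd.neg_pow] at hB
    have hD := mul_nonneg_of_nonpos_of_nonpos hA hB
    have hE : 0 < t ^ N * t ^ N := mul_self_pos.2 (pow_ne_zero _ ht0)
    have hF := mul_pos hE hC
    nlinarith
  obtain ⟨m, hm2⟩ := hev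
  obtain ⟨B, hB0, hB⟩ : ∃ B : ℝ, 0 ≤ B ∧ ∀ᶠ t in 𝓝 0, 2 * |u t| ≤ B ^ 2 := by
    refine ⟨Real.sqrt (2 * (|u 0| + 1)), Real.sqrt_nonneg _, ?_⟩
    rw [Real.sq_sqrt (by positivity)]
    have : Tendsto (fun t => |u t|) (𝓝 0) (𝓝 |u 0|) := hu.continuousAt.tendsto.abs
    filter_upwards [this.eventually (gt_mem_nhds (lt_add_one _))] with t ht
    linarith
  have hbound : ∀ j : ℕ, ∀ᶠ t in 𝓝 0, |(q t).coeff j| ≤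
      (B ^ (n - j) * n.choose j) * |t| ^ (m * (n - j)) := by
    intro j
    filter_upwards [h, hs, hB] with t ht hst hBt
    obtain ⟨-, hsq⟩ := sum_sq_roots hn (hm t) (hd t) hst (h1 t)
    have hroot : ∀ z ∈ ((q t).map (RingHom.id ℝ)).roots, ‖z‖ ≤ B * |t| ^ m := by
      intro x hx
      rw [Polynomial.map_id] at hx
      have : x ^ 2 ≤ ((q t).roots.map (· ^ 2)).sum := by
        refine Multiset.single_le_sum ?_ _ (Multiset.mem_map_of_mem (· ^ 2) hx)
        intro y hy
        obtain ⟨z, -, rfl⟩ := Multiset.mem_map.1 hy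
        positivity
      rw [Real.norm_eq_abs]
      have hBt0 : 0 ≤ B * |t| ^ m := by positivity
      refine abs_le_of_sq_le_sq (this.trans ?_) hBt0
      rw [hsq, ht, hm2, pow_add, mul_pow, ← abs_pow, sq_abs]
      have h2 : -(2 * u t) ≤ B ^ 2 := by
        have := neg_abs_le (u t); linarith
      have h3 : 0 ≤ (t ^ m) ^ 2 := sq_nonneg _
      nlinarith
    have := coeff_le_of_roots_le j (hm t) (by simpa using hst) hroot
    rw [Polynomial.map_id, hd t, Real.norm_eq_abs] at this
    refine this.trans (le_of_eq ?_)
    rw [mul_pow, pow_mul]; ring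
  choose b hba hb using fun j : ℕ => analytic_div (ha j) _ _ (hbound j)
  let R : ℝ → ℝ[X] := fun t => mkP n (fun i => b i t)
  have hRm : ∀ t, (R t).Monic := fun t => mkP_monic _ _
  have hRd : ∀ t, (R t).natDegree = n := fun t => mkP_natDegree _ _
  have hRa : ∀ j, AnalyticAt ℝ (fun t => (R t).coeff j) 0 :=
    mkP_coeff_analytic fun i => hba i
  have hqR : ∀ᶠ t in 𝓝 0, q t = (R t).scaleRoots (t ^ m) := by
    have : ∀ᶠ t in 𝓝 (0:ℝ), ∀ i : Fin n, (q t).coeff i = t ^ (m * (n - i)) * b i t :=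
      Filter.eventually_all.2 fun i => hb i
    filter_upwards [this] with t ht
    ext j
    rw [coeff_scaleRoots, hRd]
    rcases lt_trichotomy j n with hj | hj | hj
    · rw [ht ⟨j, hj⟩, mkP_coeff, dif_pos hj, pow_mul]; ring
    · subst hj
      have e1 : (q t).coeff j = 1 := by have := hm t; rwa [Monic, leadingCoeff, hd] at this
      have e2 : (R t).coeff j = 1 := by have := hRm t; rwa [Monic, leadingCoeff, hRd] at this
      simp [e1, e2]
    · rw [coeff_eq_zero_of_natDegree_lt (by rw [hd]; exact hj),
        coeff_eq_zero_of_natDegree_lt (by rw [hRd]; exact hj), zero_mul]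
  have hRs' : ∀ᶠ t in 𝓝[≠] 0, (R t).Splits := by
    filter_upwards [hqR.filter_mono nhdsWithin_le_nhds, hs.filter_mono nhdsWithin_le_nhds,
      self_mem_nhdsWithin] with t h1 h2 h3
    have h3 : t ≠ 0 := h3
    have : R t = (q t).scaleRoots (t ^ m)⁻¹ := by
      rw [h1, ← scaleRoots_mul, mul_inv_cancel₀ (pow_ne_zero _ h3), scaleRoots_one]
    rw [this]
    exact h2.scaleRoots _
  have hR0s : (R 0).Splits := splits_limit hRm hRd hRa hRs'
  have hRs : ∀ᶠ t in 𝓝 0, (R t).Splits := by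
    rw [eventually_nhdsWithin_iff] at hRs'
    filter_upwards [hRs'] with t ht
    by_cases h0 : t = 0
    · rw [h0]; exact hR0s
    · exact ht h0
  have hb1 : b (n - 1) 0 = 0 := by
    refine eq_at_zero (g := fun _ => 0) (hba _).continuousAt continuousAt_const ?_
    filter_upwards [(hb (n - 1)).filter_mono nhdsWithin_le_nhds, self_mem_nhdsWithin] with t h2 h3
    have h3 : t ≠ 0 := h3
    rw [h1] at h2
    exact (mul_eq_zero.1 h2.symm).resolve_left (pow_ne_zero _ h3)
  have hb2 : b (n - 2) 0 = u 0 := by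
    refine eq_at_zero (hba _).continuousAt hu.continuousAt ?_
    filter_upwards [(hb (n - 2)).filter_mono nhdsWithin_le_nhds,
      h.filter_mono nhdsWithin_le_nhds, self_mem_nhdsWithin] with t h2 h4 h3
    have h3 : t ≠ 0 := h3
    have e : m * (n - (n - 2)) = N := by
      have : n - (n - 2) = 2 := by omega
      rw [this]; omega
    rw [h4, e] at h2
    exact (mul_left_cancel₀ (pow_ne_zero _ h3) h2).symm
  have c1 : (R 0).coeff (n - 1) = 0 := by
    rw [mkP_coeff, dif_pos (by omega)]; exact hb1
  have c2 : (R 0).coeff (n - 2) = u 0 := by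
    rw [mkP_coeff, dif_pos (by omega)]; exact hb2
  obtain ⟨hsum, hsq⟩ := sum_sq_roots hn (hRm 0) (hRd 0) hR0s c1
  have htwo : ∃ r s : ℝ, r ≠ s ∧ (R 0).IsRoot r ∧ (R 0).IsRoot s := by
    by_contra hcon
    push Not at hcon
    have hcard := hR0s.natDegree_eq_card_roots
    rw [hRd] at hcard
    obtain ⟨r, hr⟩ : ∃ r, r ∈ (R 0).roots :=
      Multiset.card_pos_iff_exists_mem.1 (by omega)
    have hrep : (R 0).roots = Multiset.replicate n r := by
      refine Multiset.eq_replicate.2 ⟨hcard.symm, fun x hx => ?_⟩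
      by_contra hne
      exact hcon x r hne (isRoot_of_mem_roots hx) (isRoot_of_mem_roots hr)
    rw [hrep] at hsum hsq
    rw [Multiset.sum_replicate, nsmul_eq_mul] at hsum
    have hr0 : r = 0 := (mul_eq_zero.1 hsum).resolve_left (by positivity)
    rw [hr0, c2] at hsq
    simp at hsq
    exact hu0 hsq
  obtain ⟨r, s, hrs, hr, hs'⟩ := htwo
  obtain ⟨μ, hμ, hμ'⟩ := split_case IH R hRm hRd hRa hRs r s hrs hr hs'
  refine ⟨fun i t => μ i t * t ^ m, fun i => ?_, ?_⟩
  · have := hμ i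
    fun_prop
  · filter_upwards [hqR, hμ'] with t h1 h2
    rw [h1, h2, scaleRoots_prod]

theorem claim_all (n : ℕ) : Claim n := by
  induction n using Nat.strong_induction_on with
  | _ n IH =>
  intro p hm hd ha hs
  rcases Nat.lt_or_ge n 2 with hn | hn
  · refine ⟨fun _ t => -(p t).coeff 0, fun _ => (ha 0).neg, Eventually.of_forall fun t => ?_⟩
    conv_lhs => rw [eq_mkP (hm t) (hd t)]
    unfold mkP
    interval_cases n
    · simp
    · simp
  let c : ℝ → ℝ := fun t => -((p t).coeff (n - 1)) / n
  have hc : AnalyticAt ℝ c 0 := (ha (n - 1)).neg.div_const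
  obtain ⟨μ, hμ, hμ'⟩ := unscale_case hn IH (fun t => taylor (c t) (p t))
    (fun t => by rw [Monic, leadingCoeff_taylor]; exact hm t)
    (fun t => by rw [natDegree_taylor]; exact hd t) (taylor_analytic hd ha hc)
    (by filter_upwards [hs] with t ht using ht.taylor _)
    (fun t => taylor_facts (by omega) (hm t) (hd t))
  refine ⟨fun i t => μ i t + c t, fun i => (hμ i).add hc, ?_⟩
  filter_upwards [hμ'] with t ht
  have : p t = taylor (-c t) (taylor (c t) (p t)) := by
    rw [taylor_taylor]; simp
  rw [this, ht]
  change taylorAlgHom (-c t) _ = _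
  rw [map_prod]
  refine Finset.prod_congr rfl fun i _ => ?_
  simp
  ring

lemma dich {l : Filter ℝ} (hl : l ≤ 𝓝 0)
    (hp : ∀ N : ℕ, (∀ᶠ t in l, 0 < t ^ N) ∨ (∀ᶠ t in l, t ^ N < 0))
    {f : ℝ → ℝ} (hf : AnalyticAt ℝ f 0) : (∀ᶠ t in l, 0 ≤ f t) ∨ (∀ᶠ t in l, f t < 0) := by
  rcases analytic_form hf with h | ⟨N, u, hu, hu0, h⟩
  · left
    filter_upwards [hl h] with t ht using (show f t = 0 from ht).ge
  have h : ∀ᶠ t in l, f t = t ^ N * u t := hl h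
  rcases lt_or_gt_of_ne hu0 with h0 | h0
  · have h0 : ∀ᶠ t in l, u t < 0 := hl (hu.continuousAt.tendsto.eventually (gt_mem_nhds h0))
    rcases hp N with hN | hN
    · right
      filter_upwards [h, h0, hN] with t h1 h2 h3
      rw [h1]; exact mul_neg_of_pos_of_neg h3 h2
    · left
      filter_upwards [h, h0, hN] with t h1 h2 h3
      rw [h1]; exact (mul_pos_of_neg_of_neg h3 h2).le
  · have h0 : ∀ᶠ t in l, 0 < u t := hl (hu.continuousAt.tendsto.eventually (lt_mem_nhds h0))
    rcases hp N with hN | hN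
    · left
      filter_upwards [h, h0, hN] with t h1 h2 h3
      rw [h1]; exact (mul_pos h3 h2).le
    · right
      filter_upwards [h, h0, hN] with t h1 h2 h3
      rw [h1]; exact mul_neg_of_neg_of_pos h3 h2

lemma exists_sort_perm {n : ℕ} {l : Filter ℝ} [l.NeBot] (hl : l ≤ 𝓝 0)
    (hp : ∀ N : ℕ, (∀ᶠ t in l, 0 < t ^ N) ∨ (∀ᶠ t in l, t ^ N < 0))
    {μ : Fin n → ℝ → ℝ} (hμ : ∀ i, AnalyticAt ℝ (μ i) 0) :
    ∃ π : Equiv.Perm (Fin n), ∀ᶠ t in l, Monotone (fun i => μ (π i) t) := by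
  have hall : ∀ᶠ t in l, ∀ i j, μ i t ≤ μ j t → ∀ᶠ s in l, μ i s ≤ μ j s := by
    refine eventually_all.2 fun i => eventually_all.2 fun j => ?_
    rcases dich hl hp ((hμ j).sub (hμ i)) with h | h
    · refine Eventually.of_forall fun t _ => ?_
      filter_upwards [h] with s hs
      exact sub_nonneg.1 hs
    · filter_upwards [h] with t ht h2
      have : μ j t - μ i t < 0 := ht
      linarith
  obtain ⟨t0, ht0⟩ := hall.exists
  refine ⟨Tuple.sort (fun i => μ i t0), ?_⟩
  have hmono := Tuple.monotone_sort (fun i => μ i t0)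
  have : ∀ᶠ t in l, ∀ i j : Fin n, i ≤ j → μ (Tuple.sort (fun i => μ i t0) i) t ≤
      μ (Tuple.sort (fun i => μ i t0) j) t := by
    refine eventually_all.2 fun i => eventually_all.2 fun j => ?_
    by_cases hij : i ≤ j
    · filter_upwards [ht0 _ _ (hmono hij)] with t ht _ using ht
    · exact Eventually.of_forall fun t h => absurd h hij
  filter_upwards [this] with t ht i j hij using ht i j hij

lemma mono_eq {n : ℕ} {f g : Fin n → ℝ} (hf : Monotone f) (hg : Monotone g)
    (h : (Finset.univ.val.map f) = Finset.univ.val.map g) : f = g := by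
  rw [Fin.univ_val_map, Fin.univ_val_map, Multiset.coe_eq_coe] at h
  exact List.ofFn_injective (h.eq_of_sortedLE (List.sortedLE_ofFn_iff.2 hf)
    (List.sortedLE_ofFn_iff.2 hg))

lemma eigs_mono {n : ℕ} {H : Matrix (Fin n) (Fin n) ℂ} (hH : H.IsHermitian) :
    Monotone (eigs H) := by
  rw [eigs, dif_pos hH]
  exact Tuple.monotone_sort _

lemma eigs_charpoly {n : ℕ} {H : Matrix (Fin n) (Fin n) ℂ} (hH : H.IsHermitian) :
    H.charpoly = (∏ i, (X - C (eigs H i))).map (algebraMap ℝ ℂ) := by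
  rw [hH.charpoly_eq, eigs, dif_pos hH, Polynomial.map_prod]
  simp only [Polynomial.map_sub, Polynomial.map_X, Polynomial.map_C, Function.comp]
  exact (Equiv.prod_comp (Tuple.sort hH.eigenvalues)
    (fun i => (X - C ((hH.eigenvalues i : ℝ) : ℂ)))).symm

lemma charpoly_analytic {n : ℕ} {H : ℝ → Matrix (Fin n) (Fin n) ℂ} (hH : AnalyticAt ℝ H 0)
    (j : ℕ) : AnalyticAt ℝ (fun t => (H t).charpoly.coeff j) 0 := by
  have hent : ∀ ij : Fin n × Fin n, AnalyticAt ℝ (fun t => H t ij.1 ij.2) 0 := by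
    intro ij
    have h1 : AnalyticAt ℝ (fun t => H t ij.1) 0 := (analyticAt_pi_iff.1 hH) ij.1
    exact (analyticAt_pi_iff.1 h1) ij.2
  have h := AnalyticAt.aeval_mvPolynomial hent ((Matrix.charpoly.univ ℝ (Fin n)).coeff j)
  refine h.congr (Eventually.of_forall fun t => ?_)
  have := Matrix.charpoly.univ_coeff_eval₂Hom (n := Fin n) (algebraMap ℝ ℂ)
    (fun ij => H t ij.1 ij.2) j
  exact this

lemma eigs_branches {n : ℕ} (H : ℝ → Matrix (Fin n) (Fin n) ℂ) (hanal : AnalyticAt ℝ H 0)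
    (hherm : ∀ᶠ t in 𝓝 0, (H t).IsHermitian) :
    ∃ μ : Fin n → ℝ → ℝ, (∀ i, AnalyticAt ℝ (μ i) 0) ∧
      ∀ᶠ t in 𝓝 0, ∀ π : Equiv.Perm (Fin n), Monotone (fun i => μ (π i) t) →
        eigs (H t) = fun i => μ (π i) t := by
  obtain ⟨μ, hμ, h⟩ := claim_all n (fun t => ∏ i, (X - C (eigs (H t) i)))
    (fun t => monic_prod_of_monic _ _ fun i _ => monic_X_sub_C _)
    (fun t => by rw [natDegree_prod_of_monic _ _ fun i _ => monic_X_sub_C _]; simp)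
    (fun j => by
      have h := (Complex.reCLM.analyticAt _).comp (charpoly_analytic hanal j)
      refine h.congr ?_
      filter_upwards [hherm] with t ht
      simp [eigs_charpoly ht, coeff_map])
    (Eventually.of_forall fun t => Splits.prod fun i _ => Splits.X_sub_C _)
  refine ⟨μ, hμ, ?_⟩
  filter_upwards [h, hherm] with t ht hH π hπ
  refine mono_eq (eigs_mono hH) hπ ?_
  have hr : ∀ f : Fin n → ℝ, (∏ i, (X - C (f i))).roots = Finset.univ.val.map f := by
    intro f
    have := roots_multiset_prod_X_sub_C (Finset.univ.val.map f)
    rw [Multiset.map_map] at this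
    exact this
  have h2 := congrArg roots ht
  rw [hr, hr (fun i => μ i t)] at h2
  rw [h2]
  have := Equiv.prod_comp π (fun i => (X - C (μ i t)))
  rw [← hr (fun i => μ i t), ← this, hr (fun i => μ (π i) t)]

end

/-- **The eigenvalues of an analytic one-parameter Hermitian family are analytic**, after a
suitable permutation of the indexing for negative `t`; in particular, for each small `t` the
values `λ̃_1(t), …, λ̃_n(t)` form the multiset of eigenvalues of `H(t)` with multiplicity. -/
theorem eigenvalues_analytic {n : ℕ} (H : ℝ → Matrix (Fin n) (Fin n) ℂ)
    (δ : ℝ) (hδ : 0 < δ) (hanal : AnalyticOnNhd ℝ H (Set.Ioo (-δ) δ))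
    (hherm : ∀ t ∈ Set.Ioo (-δ) δ, (H t).IsHermitian) :
    ∃ ε > 0, ε ≤ δ ∧ ∃ σ : Equiv.Perm (Fin n),
      (∀ i : Fin n, AnalyticOnNhd ℝ
        (fun t => if 0 ≤ t then eigs (H t) i else eigs (H t) (σ i)) (Set.Ioo (-ε) ε)) ∧
      ∀ t ∈ Set.Ioo (-ε) ε,
        (Finset.univ.val.map fun i : Fin n =>
            if 0 ≤ t then eigs (H t) i else eigs (H t) (σ i))
          = Finset.univ.val.map fun i : Fin n => eigs (H t) i := by
  open Filter Topology in
  have h0 : (0:ℝ) ∈ Set.Ioo (-δ) δ := ⟨by linarith, hδ⟩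
  obtain ⟨μ, hμ, hE⟩ := eigs_branches H (hanal 0 h0)
    (by filter_upwards [Ioo_mem_nhds h0.1 h0.2] with t ht using hherm t ht)
  obtain ⟨π, hπ⟩ := exists_sort_perm (l := 𝓝[>] 0) nhdsWithin_le_nhds
    (fun N => Or.inl (by
      filter_upwards [self_mem_nhdsWithin] with t ht using pow_pos ht N)) hμ
  obtain ⟨ρ, hρ⟩ := exists_sort_perm (l := 𝓝[<] 0) nhdsWithin_le_nhds
    (fun N => by
      rcases Nat.even_or_odd N with h | h
      · left
        filter_upwards [self_mem_nhdsWithin] with t ht using h.pow_pos (ne_of_lt ht)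
      · right
        filter_upwards [self_mem_nhdsWithin] with t ht using h.pow_neg ht) hμ
  have hπ0 : Monotone (fun i => μ (π i) 0) := by
    intro i j hij
    refine le_of_tendsto_of_tendsto (b := 𝓝[>] (0:ℝ))
      ((hμ (π i)).continuousAt.tendsto.mono_left nhdsWithin_le_nhds)
      ((hμ (π j)).continuousAt.tendsto.mono_left nhdsWithin_le_nhds) ?_
    filter_upwards [hπ] with t ht using ht hij
  rw [eventually_nhdsWithin_iff] at hπ hρ
  have hA : ∀ᶠ t in 𝓝 (0:ℝ), ∀ i, AnalyticAt ℝ (μ i) t :=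
    eventually_all.2 fun i => (hμ i).eventually_analyticAt
  obtain ⟨ε', hε', hball⟩ := Metric.eventually_nhds_iff.1 (hE.and (hπ.and (hρ.and hA)))
  have hmem : ∀ t ∈ Set.Ioo (-(min ε' δ)) (min ε' δ), dist t 0 < ε' := by
    intro t ht
    rw [Real.dist_eq, sub_zero, abs_lt]
    have := min_le_left ε' δ
    exact ⟨by linarith [ht.1], by linarith [ht.2]⟩
  refine ⟨min ε' δ, lt_min hε' hδ, min_le_right _ _, π.trans ρ.symm, fun i => ?_, fun t ht => ?_⟩
  · have heq : ∀ t ∈ Set.Ioo (-(min ε' δ)) (min ε' δ),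
        μ (π i) t = if 0 ≤ t then eigs (H t) i else eigs (H t) ((π.trans ρ.symm) i) := by
      intro t ht
      obtain ⟨e1, e2, e3, e4⟩ := hball (hmem t ht)
      split_ifs with h
      · have hm : Monotone (fun i => μ (π i) t) := by
          rcases h.eq_or_lt with h | h
          · rw [← h]; exact hπ0
          · exact e2 h
        rw [e1 π hm]
      · rw [e1 ρ (e3 (not_le.1 h))]
        simp
    intro t ht
    refine ((hball (hmem t ht)).2.2.2 (π i)).congr ?_
    filter_upwards [Ioo_mem_nhds ht.1 ht.2] with s hs using heq s hs
  · split_ifs with h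
    · rfl
    · have := Multiset.map_univ_val_equiv (π.trans ρ.symm)
      conv_rhs => rw [← this, Multiset.map_map]
      rfl

end
end
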